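/- arXiv:2201.09262 — 3 statements merged into one kernel-verified Lean document; each statement's English description precedes it below -/
import Mathlib

section
/- For every positive integer n, the multiple t-value t(2,2,...,2) with n twos equals π^(2n)/(2^(2n)·(2n)!). -/
open Real

/-!
The sum over `i₁ < ⋯ < iₙ` is the `n`-th elementary symmetric function of the family
`1 / (2 * i + 1) ^ 2`, hence the coefficient of `x ^ n` in `∏ᵢ (1 + x / (2 * i + 1) ^ 2)`.
At `x = -z ^ 2` this product is Euler's product for `cos (π * z / 2)`: split the product for
`sin (π * z)` into even and odd factors, and compare with `2 * sin (π * z / 2) * cos (π * z / 2)`.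
The coefficients can therefore be read off from the Taylor series of the cosine.
-/

section ElementarySymmetric

variable {ι : Type*} [LinearOrder ι]

/-- The elementary symmetric function of degree `n` of a family `a`, as a series over the
strictly increasing `n`-tuples of indices. For `a i = 1 / (2 * i + 1) ^ 2` this is the multiple
`t`-value `t(2, …, 2)`. The value is `0` if the series does not converge unconditionally. -/
noncomputable def esymmTsum {R : Type*} [CommSemiring R] [TopologicalSpace R]
    (a : ι → R) (n : ℕ) : R :=
  ∑' f : {f : Fin n → ι // StrictMono f}, ∏ i, a (f.1 i)

/-- Strictly increasing `n`-tuples correspond to their ranges, the subsets with `n` elements. -/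
def strictMonoEquivPowersetCard (ι : Type*) [LinearOrder ι] (n : ℕ) :
    {f : Fin n → ι // StrictMono f} ≃ Set.powersetCard ι n :=
  Equiv.trans
    { toFun := fun f ↦ OrderEmbedding.ofStrictMono f.1 f.2
      invFun := fun e ↦ ⟨e, e.strictMono⟩ }
    Set.powersetCard.ofFinEmbEquiv

theorem prod_strictMonoEquivPowersetCard {M : Type*} [CommMonoid M] (a : ι → M) {n : ℕ}
    (f : {f : Fin n → ι // StrictMono f}) :
    ∏ i ∈ (strictMonoEquivPowersetCard ι n f).1, a i = ∏ i, a (f.1 i) :=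
  Finset.prod_map Finset.univ _ a

theorem tsum_powersetCard_prod {R : Type*} [CommSemiring R] [TopologicalSpace R]
    (a : ι → R) (n : ℕ) :
    ∑' s : Set.powersetCard ι n, ∏ i ∈ s.1, a i = esymmTsum a n := by
  rw [esymmTsum, ← (strictMonoEquivPowersetCard ι n).tsum_eq]
  simp only [prod_strictMonoEquivPowersetCard]

variable {R : Type*} [NormedCommRing R] [NormOneClass R] [CompleteSpace R] {a : ι → R}

theorem hasSum_esymmTsum (ha : Summable (‖a ·‖)) :
    HasSum (esymmTsum a) (∏' i, (1 + a i)) := by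
  have hprod : Summable fun s : Finset ι ↦ ∏ i ∈ s, a i :=
    summable_finsetProd_of_summable_norm ha
  have hcard := Set.powersetCard.prodEquiv.hasSum_iff.2 hprod.hasSum
  rw [tprod_one_add hprod]
  convert hcard.sigma fun n ↦ (hcard.summable.sigma_factor n).hasSum using 1
  exact funext fun n ↦ (tsum_powersetCard_prod a n).symm

theorem summable_prod_strictMono (ha : Summable (‖a ·‖)) (n : ℕ) :
    Summable fun f : {f : Fin n → ι // StrictMono f} ↦ ∏ i, a (f.1 i) := by
  simpa only [Function.comp_def, prod_strictMonoEquivPowersetCard] using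
    (summable_finsetProd_of_summable_norm ha).comp_injective
      (Subtype.val_injective.comp (strictMonoEquivPowersetCard ι n).injective)

theorem esymmTsum_const_mul (ha : Summable (‖a ·‖)) (x : R) (n : ℕ) :
    esymmTsum (fun i ↦ x * a i) n = x ^ n * esymmTsum a n := by
  simp only [esymmTsum, Finset.prod_mul_distrib, Finset.prod_const, Finset.card_fin]
  exact (summable_prod_strictMono ha n).tsum_mul_left _

theorem hasSum_pow_mul_esymmTsum (ha : Summable (‖a ·‖)) (x : R) :
    HasSum (fun n ↦ x ^ n * esymmTsum a n) (∏' i, (1 + x * a i)) := by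
  have hxa : Summable fun i ↦ ‖x * a i‖ :=
    (ha.mul_left ‖x‖).of_nonneg_of_le (fun _ ↦ norm_nonneg _) fun _ ↦ norm_mul_le _ _
  simpa only [← esymmTsum_const_mul ha] using hasSum_esymmTsum hxa

end ElementarySymmetric

theorem eq_of_eventually_hasSum_pow_mul {𝕜 : Type*} [NontriviallyNormedField 𝕜]
    {c d : ℕ → 𝕜} {F : 𝕜 → 𝕜} (hc : ∀ᶠ x in nhds 0, HasSum (fun n ↦ x ^ n * c n) (F x))
    (hd : ∀ᶠ x in nhds 0, HasSum (fun n ↦ x ^ n * d n) (F x)) : c = d := by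
  have hasFPowerSeriesAt {b : ℕ → 𝕜}
      (hb : ∀ᶠ x in nhds 0, HasSum (fun n ↦ x ^ n * b n) (F x)) :
      HasFPowerSeriesAt F (FormalMultilinearSeries.ofScalars 𝕜 b) 0 := by
    simpa [hasFPowerSeriesAt_iff, FormalMultilinearSeries.coeff_ofScalars] using hb
  exact FormalMultilinearSeries.ofScalars_series_injective 𝕜 𝕜
    ((hasFPowerSeriesAt hc).eq_formalMultilinearSeries (hasFPowerSeriesAt hd))

theorem continuous_tprod_one_add_mul {ι X R : Type*} [TopologicalSpace X] [LocallyCompactSpace X]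
    [NormedCommRing R] [NormOneClass R] [CompleteSpace R] {a : ι → R} (ha : Summable (‖a ·‖))
    {g : X → R} (hg : Continuous g) : Continuous fun x ↦ ∏' i, (1 + g x * a i) := by
  refine continuous_iff_continuousAt.2 fun x₀ ↦ ?_
  obtain ⟨r, hr⟩ := exists_gt ‖g x₀‖
  have hopen : IsOpen {x | ‖g x‖ < r} := isOpen_lt hg.norm continuous_const
  have hbound (i : ι) (x : X) (hx : ‖g x‖ < r) : ‖g x * a i‖ ≤ r * ‖a i‖ :=
    (norm_mul_le _ _).trans (by gcongr)
  have hlim := hasProdLocallyUniformlyOn_iff_tendstoLocallyUniformlyOn.1 <|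
    Summable.hasProdLocallyUniformlyOn_one_add hopen (ha.mul_left r)
      (.of_forall hbound) (fun i ↦ (hg.mul_const (a i)).continuousOn)
  refine (hlim.continuousOn ?_).continuousAt (hopen.mem_nhds hr)
  exact .of_forall fun s ↦ by fun_prop

theorem sin_pi_mul_eq_tprod (z : ℂ) :
    Complex.sin (π * z) = π * z * ∏' n : ℕ, (1 + sineTerm z n) := by
  refine tendsto_nhds_unique (Complex.tendsto_euler_sin_prod z) ?_
  simpa only [sineTerm, neg_div, ← sub_eq_add_neg] using
    (multipliable_sineTerm z).tendsto_prod_tprod_nat.const_mul (π * z)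

theorem summable_one_div_odd_pow {k : ℕ} (hk : 1 < k) :
    Summable fun i : ℕ ↦ 1 / (2 * (i : ℝ) + 1) ^ k := by
  have hodd : Function.Injective fun i : ℕ ↦ 2 * i + 1 := fun i j h ↦ by simpa using h
  simpa [Function.comp_def] using
    (Real.summable_one_div_nat_pow.2 hk).comp_injective hodd

theorem summable_norm_one_div_odd_sq :
    Summable fun i : ℕ ↦ ‖1 / (2 * (i : ℂ) + 1) ^ 2‖ := by
  simpa using
    (Complex.summable_ofReal.2 (summable_one_div_odd_pow one_lt_two)).norm

theorem multipliable_one_sub_sq_div_odd_sq (z : ℂ) :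
    Multipliable fun n : ℕ ↦ 1 - z ^ 2 / (2 * (n : ℂ) + 1) ^ 2 := by
  have hsum : Summable fun n : ℕ ↦ ‖-z ^ 2 * (1 / (2 * (n : ℂ) + 1) ^ 2)‖ := by
    simpa only [norm_mul] using summable_norm_one_div_odd_sq.mul_left ‖-z ^ 2‖
  simpa only [mul_one_div, neg_div, ← sub_eq_add_neg] using multipliable_one_add_of_summable hsum

theorem tprod_sineTerm_eq_mul_tprod_sineTerm_half (z : ℂ) :
    ∏' n : ℕ, (1 + sineTerm z n) =
      (∏' n : ℕ, (1 - z ^ 2 / (2 * (n : ℂ) + 1) ^ 2)) *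
        ∏' n : ℕ, (1 + sineTerm (z / 2) n) := by
  have heven (n : ℕ) : 1 + sineTerm z (2 * n) = 1 - z ^ 2 / (2 * (n : ℂ) + 1) ^ 2 := by
    simp [sineTerm, neg_div, sub_eq_add_neg]
  have hodd (n : ℕ) : 1 + sineTerm z (2 * n + 1) = 1 + sineTerm (z / 2) n := by
    have : (n : ℂ) + 1 ≠ 0 := n.cast_add_one_ne_zero
    have htwo : (2 * n + 1 + 1 : ℂ) = 2 * (n + 1) := by ring
    simp only [sineTerm]
    push_cast
    rw [htwo]
    field_simp
  calc ∏' n : ℕ, (1 + sineTerm z n)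
      = (∏' n : ℕ, (1 + sineTerm z (2 * n))) * ∏' n : ℕ, (1 + sineTerm z (2 * n + 1)) :=
        (tprod_even_mul_odd (f := fun n ↦ 1 + sineTerm z n)
          (by simpa only [heven] using multipliable_one_sub_sq_div_odd_sq z)
          (by simpa only [hodd] using multipliable_sineTerm (z / 2))).symm
    _ = (∏' n : ℕ, (1 - z ^ 2 / (2 * (n : ℂ) + 1) ^ 2)) * ∏' n : ℕ, (1 + sineTerm (z / 2) n) := by
      simp only [heven, hodd]

theorem dense_sin_mul_ne_zero {c : ℂ} (hc : c ≠ 0) : Dense {z : ℂ | Complex.sin (c * z) ≠ 0} := by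
  refine Set.Countable.dense_compl (s := {z : ℂ | Complex.sin (c * z) = 0}) ℂ ?_
  refine (Set.countable_range fun k : ℤ ↦ k * π / c).mono fun z hz ↦ ?_
  obtain ⟨k, hk⟩ := Complex.sin_eq_zero_iff.1 hz
  exact ⟨k, by simp only [← hk]; field_simp⟩

theorem cos_pi_div_two_mul_eq_tprod (z : ℂ) :
    Complex.cos (π / 2 * z) = ∏' n : ℕ, (1 - z ^ 2 / (2 * (n : ℂ) + 1) ^ 2) := by
  have hc : (π / 2 : ℂ) ≠ 0 := by simp [pi_ne_zero]
  have hcos : Continuous fun z : ℂ ↦ Complex.cos (π / 2 * z) := by fun_prop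
  have hprod : Continuous fun z : ℂ ↦ ∏' n : ℕ, (1 - z ^ 2 / (2 * (n : ℂ) + 1) ^ 2) := by
    simpa only [mul_one_div, neg_div, ← sub_eq_add_neg] using
      continuous_tprod_one_add_mul summable_norm_one_div_odd_sq
        (g := fun z ↦ -z ^ 2) (by fun_prop)
  -- By continuity, it suffices to treat the `w` for which `sin (π / 2 * w)` can be cancelled.
  refine congrFun (hcos.ext_on (dense_sin_mul_ne_zero hc) hprod ?_) z
  intro w hw
  have hdouble : Complex.sin (π * w) =
      2 * Complex.sin (π / 2 * w) * Complex.cos (π / 2 * w) := by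
    rw [← Complex.sin_two_mul]; ring_nf
  have hhalf : Complex.sin (π / 2 * w) = π * (w / 2) * ∏' n : ℕ, (1 + sineTerm (w / 2) n) := by
    rw [← sin_pi_mul_eq_tprod]; ring_nf
  refine mul_left_cancel₀ (mul_ne_zero two_ne_zero hw) ?_
  calc 2 * Complex.sin (π / 2 * w) * Complex.cos (π / 2 * w)
      = π * w * ∏' n : ℕ, (1 + sineTerm w n) := by rw [← hdouble, sin_pi_mul_eq_tprod]
    _ = 2 * Complex.sin (π / 2 * w) * ∏' n : ℕ, (1 - w ^ 2 / (2 * (n : ℂ) + 1) ^ 2) := by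
      rw [tprod_sineTerm_eq_mul_tprod_sineTerm_half, hhalf]; ring

theorem hasSum_pow_mul_tprod_one_add_mul_one_div_odd_sq (x : ℂ) :
    HasSum (fun n : ℕ ↦ x ^ n * ((π : ℂ) ^ (2 * n) / (2 ^ (2 * n) * (2 * n).factorial)))
      (∏' i : ℕ, (1 + x * (1 / (2 * (i : ℂ) + 1) ^ 2))) := by
  obtain ⟨z, hz⟩ := IsAlgClosed.exists_pow_nat_eq (-x) two_pos
  obtain rfl : x = -z ^ 2 := by rw [hz, neg_neg]
  simp only [mul_one_div, neg_div, ← sub_eq_add_neg]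
  rw [← cos_pi_div_two_mul_eq_tprod]
  convert Complex.hasSum_cos (π / 2 * z) using 2 with n
  rw [neg_pow, ← pow_mul, mul_pow, div_pow]
  field_simp

theorem esymmTsum_one_div_odd_sq :
    esymmTsum (fun i : ℕ ↦ 1 / (2 * (i : ℂ) + 1) ^ 2) =
      fun n ↦ (π : ℂ) ^ (2 * n) / (2 ^ (2 * n) * (2 * n).factorial) :=
  eq_of_eventually_hasSum_pow_mul
    (.of_forall (hasSum_pow_mul_esymmTsum summable_norm_one_div_odd_sq))
    (.of_forall hasSum_pow_mul_tprod_one_add_mul_one_div_odd_sq)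

theorem t_two_pow (n : ℕ) (hn : 0 < n) :
    (∑' f : {f : Fin n → ℕ // StrictMono f},
      ∏ i, 1 / (2 * (f.1 i : ℝ) + 1) ^ 2) =
      π ^ (2 * n) / (2 ^ (2 * n) * Nat.factorial (2 * n)) := by
  apply Complex.ofReal_injective
  push_cast
  exact congrFun esymmTsum_one_div_odd_sq n
end

section
/- For every positive integer n and nonnegative integer b, ∫₀¹ x^(2n−1) · (2·arccos x)^(2b+1)/(2b+1)! dx = (C(2n,n)/(n·4^n)) · (π/2) · Σ_{n < m₁ < ... < m_b} 1/(m₁² ⋯ m_b²), where for b = 0 the sum over m's is interpreted as 1. -/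
open Real

/-- `∑_{n < m₁ < ⋯ < m_b} 1/(m₁² ⋯ m_b²)`; equals `1` when `b = 0`. -/
noncomputable def zetaTail (b n : ℕ) : ℝ :=
  ∑' f : {f : Fin b → ℕ // StrictMono f ∧ ∀ i, n < f i}, ∏ i, 1 / ((f.1 i : ℝ)) ^ 2

/-!
Substituting `x = cos t` and integrating by parts twice turns the arccosine moments into the
moments `C m k = ∫₀^{π/2} cosᵐ t · (2t)ᵏ/k! dt`, and relates `C m (k + 2)`, `C (m + 2) (k + 2)`
and `C (m + 2) k`. In terms of the normalised moments `R m k = C m k / C m 0` the relation reads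
`R m (k + 2) - R (m + 2) (k + 2) = 4 / (m + 2)² · R (m + 2) k`. Since `R m (k + 2) → 0` as
`m → ∞`, it telescopes: `R (2n) (2b + 2) = ∑_{m > n} m⁻² · R (2m) (2b)`. The nested sums
`zetaTail` obey the same recursion on `b`, by splitting off the smallest index, so
`R (2n) (2b) = zetaTail b n`, while `C (2n) 0` is the Wallis integral.
-/

section NestedSums

open Set Filter Topology

/-- Strictly increasing tuples `a < f 0 < ⋯ < f (b - 1)`, the index set of a `b`-fold nested sum.
The subtype is spelled exactly as the one `zetaTail` sums over. -/
abbrev StrictMonoAbove {α : Type*} [Preorder α] (b : ℕ) (a : α) : Type _ :=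
  {f : Fin b → α // StrictMono f ∧ ∀ i, a < f i}

/-- A nonempty increasing tuple amounts to its smallest entry `m` and a tuple above `m`. -/
def StrictMonoAbove.consEquiv {α : Type*} [Preorder α] (b : ℕ) (a : α) :
    (Σ m : Ioi a, StrictMonoAbove b (m : α)) ≃ StrictMonoAbove (b + 1) a where
  toFun p := ⟨Fin.cons p.1 p.2.1, Fin.strictMono_cons.2 ⟨p.2.2.2, p.2.2.1⟩,
    Fin.cases p.1.2 fun i => lt_trans p.1.2 (p.2.2.2 i)⟩
  invFun f := ⟨⟨f.1 0, f.2.2 0⟩, Fin.tail f.1, f.2.1.comp Fin.strictMono_succ,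
    fun i => f.2.1 i.succ_pos⟩
  left_inv _ := rfl
  right_inv f := Subtype.ext (Fin.cons_self_tail f.1)

lemma hasSum_prod_strictMonoAbove_succ {α : Type*} [Preorder α] {w F : α → ℝ} (hw : ∀ m, 0 ≤ w m)
    {b : ℕ} {a : α} {s : ℝ}
    (hF : ∀ m, a < m → HasSum (fun f : StrictMonoAbove b m => ∏ i, w (f.1 i)) (F m))
    (hs : HasSum (fun m : Ioi a => w m * F m) s) :
    HasSum (fun f : StrictMonoAbove (b + 1) a => ∏ i, w (f.1 i)) s := by
  have hfiber (m : Ioi a) :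
      HasSum (fun f : StrictMonoAbove b (m : α) => w m * ∏ i, w (f.1 i)) (w m * F m) :=
    (hF m m.2).mul_left _
  have hsigma : HasSum (fun p : Σ m : Ioi a, StrictMonoAbove b (m : α) =>
      w p.1 * ∏ i, w (p.2.1 i)) s := by
    refine HasSum.sigma_of_hasSum hs hfiber ((summable_sigma_of_nonneg fun p => ?_).2 ⟨?_, ?_⟩)
    · exact mul_nonneg (hw _) (Finset.prod_nonneg fun i _ => hw _)
    · exact fun m => (hfiber m).summable
    · simpa only [(hfiber _).tsum_eq] using hs.summable
  rw [← (StrictMonoAbove.consEquiv b a).hasSum_iff]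
  exact hsigma.congr_fun fun p => Fin.prod_univ_succ _

lemma hasSum_Ioi_of_sub_succ_eq {u v : ℕ → ℝ} (hv : ∀ n, 0 ≤ v n)
    (huv : ∀ n, u n - u (n + 1) = v (n + 1)) (hu : Tendsto u atTop (𝓝 0)) (n : ℕ) :
    HasSum (fun m : Ioi n => v m) (u n) := by
  have hrange : range (fun k => n + k + 1) = Ioi n := by
    ext m
    exact ⟨by rintro ⟨k, rfl⟩; simp only [mem_Ioi]; omega,
      fun hm => ⟨m - n - 1, by simp only [mem_Ioi] at hm ⊢; omega⟩⟩
  have hinj : Function.Injective (fun k => n + k + 1) := fun i j hij => by simpa using hij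
  have hpartial (N : ℕ) : ∑ k ∈ Finset.range N, v (n + k + 1) = u n - u (n + N) := by
    simp_rw [← huv]
    exact Finset.sum_range_sub' (fun k => u (n + k)) N
  rw [← hrange, hinj.hasSum_range_iff]
  refine (hasSum_iff_tendsto_nat_of_nonneg (fun k => hv _) _).2 ?_
  simp only [hpartial]
  simpa [add_comm] using ((tendsto_add_atTop_iff_nat n).2 hu).const_sub (u n)

theorem hasSum_prod_strictMonoAbove_of_sub_succ_eq {w : ℕ → ℝ} (hw : ∀ m, 0 ≤ w m) {F : ℕ → ℕ → ℝ}
    (hF_zero : ∀ n, F 0 n = 1)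
    (hF_sub : ∀ b n, F (b + 1) n - F (b + 1) (n + 1) = w (n + 1) * F b (n + 1))
    (hF_lim : ∀ b, Tendsto (F (b + 1)) atTop (𝓝 0)) (b n : ℕ) :
    HasSum (fun f : StrictMonoAbove b n => ∏ i, w (f.1 i)) (F b n) := by
  induction b generalizing n with
  | zero =>
    have : Unique (StrictMonoAbove 0 n) :=
      ⟨⟨⟨Fin.elim0, fun i => i.elim0, fun i => i.elim0⟩⟩, fun _ => Subsingleton.elim _ _⟩
    simp [hF_zero]
  | succ b ih =>
    have hF_nonneg (m : ℕ) : 0 ≤ F b m :=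
      (ih m).nonneg fun f => Finset.prod_nonneg fun i _ => hw _
    exact hasSum_prod_strictMonoAbove_succ hw (fun m _ => ih m)
      (hasSum_Ioi_of_sub_succ_eq (fun m => mul_nonneg (hw m) (hF_nonneg m)) (hF_sub b)
        (hF_lim b) n)

end NestedSums

section Moments

open Filter Topology MeasureTheory
open scoped Nat

/-- The moment `∫₀^{π/2} cosᵐ t · (2t)ᵏ/k! dt`. Dividing by `k!` makes differentiation in `t` lower
`k` without introducing factors depending on `k`. -/
noncomputable def cosMoment (m k : ℕ) : ℝ :=
  ∫ t in (0 : ℝ)..π / 2, cos t ^ m * ((2 * t) ^ k / k !)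

/-- The moment `∫₀¹ xᵐ · (2 arccos x)ᵏ/k! dx` which the theorem evaluates for odd `m` and `k`. -/
noncomputable def arccosMoment (m k : ℕ) : ℝ :=
  ∫ x in (0 : ℝ)..1, x ^ m * ((2 * arccos x) ^ k / k !)

/-- The cosine moment normalised by the one with `k = 0`, i.e. the mean of `(2t)ᵏ/k!` with respect
to the density proportional to `cosᵐ t` on `[0, π/2]`. -/
noncomputable def cosMomentRatio (m k : ℕ) : ℝ :=
  cosMoment m k / cosMoment m 0

lemma hasDerivAt_two_mul_pow_div_factorial (k : ℕ) (t : ℝ) :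
    HasDerivAt (fun t : ℝ => (2 * t) ^ (k + 1) / (k + 1)!) (2 * ((2 * t) ^ k / k !)) t := by
  refine ((((hasDerivAt_id t).const_mul 2).pow (k + 1)).div_const _).congr_deriv ?_
  rw [Nat.factorial_succ]
  push_cast
  simp only [id]
  field_simp

lemma hasDerivAt_cos_pow_succ (m : ℕ) (t : ℝ) :
    HasDerivAt (fun t => cos t ^ (m + 1)) (-((m + 1) * (cos t ^ m * sin t))) t := by
  refine ((hasDerivAt_cos t).pow (m + 1)).congr_deriv ?_
  push_cast
  ring

lemma hasDerivAt_cos_pow_succ_mul_sin (m : ℕ) (t : ℝ) :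
    HasDerivAt (fun t => cos t ^ (m + 1) * sin t)
      ((m + 2) * cos t ^ (m + 2) - (m + 1) * cos t ^ m) t := by
  refine ((hasDerivAt_cos_pow_succ m t).mul (hasDerivAt_sin t)).congr_deriv ?_
  linear_combination (-(m + 1) * cos t ^ m) * sin_sq_add_cos_sq t

lemma integral_comp_cos_mul_sin {g : ℝ → ℝ} (hg : Continuous g) (a b : ℝ) :
    ∫ t in a..b, g (cos t) * sin t = ∫ x in cos b..cos a, g x := by
  rw [intervalIntegral.integral_symm, ← intervalIntegral.integral_comp_mul_deriv
    (fun t _ => hasDerivAt_cos t) (by fun_prop) hg, ← intervalIntegral.integral_neg]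
  simp

lemma arccosMoment_eq_integral (m k : ℕ) :
    arccosMoment m k = ∫ t in (0 : ℝ)..π / 2, (2 * t) ^ k / k ! * (cos t ^ m * sin t) := by
  have hcont : Continuous fun x : ℝ => x ^ m * ((2 * arccos x) ^ k / k !) := by fun_prop
  have hsubst := integral_comp_cos_mul_sin hcont 0 (π / 2)
  rw [cos_zero, cos_pi_div_two] at hsubst
  rw [arccosMoment, ← hsubst]
  refine intervalIntegral.integral_congr fun t ht => ?_
  rw [Set.uIcc_of_le (by positivity)] at ht
  simp only [arccos_cos ht.1 (by linarith [ht.2, pi_pos])]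
  ring

lemma arccosMoment_succ (m k : ℕ) :
    (m + 1) * arccosMoment m (k + 1) = 2 * cosMoment (m + 1) k := by
  have h := intervalIntegral.integral_mul_deriv_eq_deriv_mul (a := 0) (b := π / 2)
    (fun t _ => hasDerivAt_two_mul_pow_div_factorial k t)
    (fun t _ => hasDerivAt_cos_pow_succ m t)
    (Continuous.intervalIntegrable (by fun_prop) _ _)
    (Continuous.intervalIntegrable (by fun_prop) _ _)
  simp only [mul_neg, intervalIntegral.integral_neg, mul_left_comm _ ((m : ℝ) + 1), mul_assoc,
    intervalIntegral.integral_const_mul, ← arccosMoment_eq_integral] at h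
  simpa [cosMoment, mul_comm] using h

lemma intervalIntegrable_cos_pow_mul (m k : ℕ) :
    IntervalIntegrable (fun t : ℝ => cos t ^ m * ((2 * t) ^ k / k !)) volume 0 (π / 2) :=
  Continuous.intervalIntegrable (by fun_prop) _ _

lemma cosMoment_add_two (m k : ℕ) :
    (m + 2) * cosMoment (m + 2) (k + 1) =
      (m + 1) * cosMoment m (k + 1) - 2 * arccosMoment (m + 1) k := by
  have h := intervalIntegral.integral_mul_deriv_eq_deriv_mul (a := 0) (b := π / 2)
    (fun t _ => hasDerivAt_two_mul_pow_div_factorial k t)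
    (fun t _ => hasDerivAt_cos_pow_succ_mul_sin m t)
    (Continuous.intervalIntegrable (by fun_prop) _ _)
    (Continuous.intervalIntegrable (by fun_prop) _ _)
  have hleft : ∫ t in (0 : ℝ)..π / 2, (2 * t) ^ (k + 1) / (k + 1)! *
      ((m + 2) * cos t ^ (m + 2) - (m + 1) * cos t ^ m) =
      (m + 2) * cosMoment (m + 2) (k + 1) - (m + 1) * cosMoment m (k + 1) := by
    simp only [cosMoment, ← intervalIntegral.integral_const_mul]
    rw [← intervalIntegral.integral_sub ((intervalIntegrable_cos_pow_mul _ _).const_mul _)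
      ((intervalIntegrable_cos_pow_mul _ _).const_mul _)]
    exact intervalIntegral.integral_congr fun t _ => by ring
  simp only [hleft, mul_assoc, intervalIntegral.integral_const_mul,
    ← arccosMoment_eq_integral] at h
  simp only [cos_pi_div_two, sin_zero, mul_zero, zero_mul, ne_eq, Nat.add_eq_zero_iff, one_ne_zero,
    and_false, not_false_eq_true, zero_pow] at h
  linear_combination h

lemma cosMoment_add_two_zero (m : ℕ) :
    (m + 2) * cosMoment (m + 2) 0 = (m + 1) * cosMoment m 0 := by
  simp only [cosMoment, pow_zero, Nat.factorial_zero, Nat.cast_one, div_one, mul_one,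
    integral_cos_pow, cos_pi_div_two, sin_zero, mul_zero, ne_eq, Nat.add_eq_zero_iff, one_ne_zero,
    and_false, not_false_eq_true, zero_pow, zero_mul, sub_zero, zero_div, zero_add]
  field_simp

lemma cosMoment_zero_pos (m : ℕ) : 0 < cosMoment m 0 := by
  simpa [cosMoment] using EulerSine.integral_cos_pow_pos m

lemma cosMoment_two_mul_zero (n : ℕ) :
    cosMoment (2 * n) 0 = n.centralBinom / 4 ^ n * (π / 2) := by
  induction n with
  | zero => simp [cosMoment]
  | succ n ih =>
    have hmoment := cosMoment_add_two_zero (2 * n)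
    have hbinom : ((n : ℝ) + 1) * (n + 1).centralBinom = 2 * (2 * n + 1) * n.centralBinom := by
      exact_mod_cast Nat.succ_mul_centralBinom_succ n
    rw [ih] at hmoment
    push_cast at hmoment
    refine mul_left_cancel₀ (by positivity : (2 * n + 2 : ℝ) ≠ 0) (hmoment.trans ?_)
    rw [pow_succ]
    field_simp
    linear_combination -2 * hbinom

lemma two_mul_pow_div_factorial_le {t : ℝ} (ht₀ : 0 ≤ t) (ht : t ≤ π / 2) (k : ℕ) :
    (2 * t) ^ (k + 2) / (k + 2)! ≤ π ^ (k + 2) * sin t ^ 2 := by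
  have hjordan : 2 * t ≤ π * sin t := by
    have := mul_le_sin ht₀ ht
    field_simp at this
    exact this
  calc (2 * t) ^ (k + 2) / (k + 2)!
      ≤ (2 * t) ^ (k + 2) :=
        div_le_self (by positivity) (mod_cast Nat.factorial_pos _)
    _ = (2 * t) ^ k * (2 * t) ^ 2 := pow_add _ _ _
    _ ≤ π ^ k * (π * sin t) ^ 2 := by gcongr; linarith
    _ = π ^ (k + 2) * sin t ^ 2 := by ring

lemma cosMoment_add_two_le (m k : ℕ) :
    cosMoment m (k + 2) ≤ π ^ (k + 2) * (cosMoment m 0 - cosMoment (m + 2) 0) := by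
  have hint := intervalIntegrable_cos_pow_mul
  simp only [cosMoment]
  rw [← intervalIntegral.integral_sub (hint m 0) (hint (m + 2) 0),
    ← intervalIntegral.integral_const_mul]
  refine intervalIntegral.integral_mono_on (by positivity) (hint m _)
    (((hint m 0).sub (hint (m + 2) 0)).const_mul _) fun t ht => ?_
  have hcos : 0 ≤ cos t := cos_nonneg_of_mem_Icc ⟨by linarith [ht.1, pi_pos], ht.2⟩
  calc cos t ^ m * ((2 * t) ^ (k + 2) / (k + 2)!)
      ≤ cos t ^ m * (π ^ (k + 2) * sin t ^ 2) := by
        gcongr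
        exact two_mul_pow_div_factorial_le ht.1 ht.2 k
    _ = _ := by
        rw [sin_sq]
        simp only [pow_zero, Nat.factorial_zero, Nat.cast_one, div_one]
        ring

lemma cosMoment_nonneg (m k : ℕ) : 0 ≤ cosMoment m k := by
  refine intervalIntegral.integral_nonneg (by positivity) fun t ht => ?_
  have hcos : 0 ≤ cos t := cos_nonneg_of_mem_Icc ⟨by linarith [ht.1, pi_pos], ht.2⟩
  have ht₀ : 0 ≤ t := ht.1
  positivity

lemma cosMomentRatio_zero (m : ℕ) : cosMomentRatio m 0 = 1 :=
  div_self (cosMoment_zero_pos m).ne'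

lemma cosMomentRatio_sub_add_two (m k : ℕ) :
    cosMomentRatio m (k + 2) - cosMomentRatio (m + 2) (k + 2) =
      4 / ((m : ℝ) + 2) ^ 2 * cosMomentRatio (m + 2) k := by
  have hpos := (cosMoment_zero_pos (m + 2)).ne'
  have hzero : cosMoment m 0 = (m + 2) * cosMoment (m + 2) 0 / (m + 1) := by
    rw [cosMoment_add_two_zero]
    field_simp
  have hmoment := cosMoment_add_two m (k + 1)
  have harccos := arccosMoment_succ (m + 1) k
  push_cast at harccos
  simp only [cosMomentRatio, hzero]
  field_simp
  linear_combination (-(m : ℝ) - 2) * hmoment + 2 * harccos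

lemma cosMomentRatio_add_two_le (m k : ℕ) :
    cosMomentRatio m (k + 2) ≤ π ^ (k + 2) / (m + 2) := by
  have hdiff : cosMoment m 0 - cosMoment (m + 2) 0 = cosMoment m 0 / (m + 2) := by
    field_simp
    linear_combination -cosMoment_add_two_zero m
  rw [cosMomentRatio, div_le_iff₀ (cosMoment_zero_pos m), div_mul_eq_mul_div, mul_div_assoc,
    ← hdiff]
  exact cosMoment_add_two_le m k

lemma tendsto_cosMomentRatio_atTop (k : ℕ) :
    Tendsto (fun m => cosMomentRatio m (k + 2)) atTop (𝓝 0) :=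
  squeeze_zero (fun m => div_nonneg (cosMoment_nonneg m _) (cosMoment_nonneg m _))
    (fun m => cosMomentRatio_add_two_le m k)
    ((tendsto_natCast_atTop_atTop.atTop_add tendsto_const_nhds).const_div_atTop _)

theorem cosMomentRatio_two_mul_eq_zetaTail (n b : ℕ) :
    cosMomentRatio (2 * n) (2 * b) = zetaTail b n := by
  refine (hasSum_prod_strictMonoAbove_of_sub_succ_eq (w := fun m => 1 / (m : ℝ) ^ 2)
    (F := fun b n => cosMomentRatio (2 * n) (2 * b)) (fun m => by positivity)
    (fun n => cosMomentRatio_zero _) (fun b n => ?_) (fun b => ?_) b n).tsum_eq.symm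
  · have h := cosMomentRatio_sub_add_two (2 * n) (2 * b)
    have hweight : 4 / (((2 * n : ℕ) : ℝ) + 2) ^ 2 = 1 / ((n + 1 : ℕ) : ℝ) ^ 2 := by
      push_cast
      field_simp
      ring
    rwa [hweight] at h
  · exact (tendsto_cosMomentRatio_atTop (2 * b)).comp
      (tendsto_id.const_mul_atTop' two_pos)

end Moments

theorem arccos_odd_moments (n b : ℕ) (hn : 0 < n) :
    (∫ x in (0:ℝ)..1, x ^ (2 * n - 1) *
        ((2 * Real.arccos x) ^ (2 * b + 1) / (Nat.factorial (2 * b + 1)))) =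
      ((Nat.choose (2 * n) n : ℝ) / ((n : ℝ) * 4 ^ n)) * (π / 2) * zetaTail b n := by
  have harccos : (2 * n : ℝ) * arccosMoment (2 * n - 1) (2 * b + 1) =
      2 * cosMoment (2 * n) (2 * b) := by
    have h := arccosMoment_succ (2 * n - 1) (2 * b)
    rw [← Nat.cast_add_one, Nat.sub_add_cancel (by omega : 1 ≤ 2 * n)] at h
    exact_mod_cast h
  have hcos : cosMoment (2 * n) (2 * b) = cosMoment (2 * n) 0 * zetaTail b n := by
    rw [← cosMomentRatio_two_mul_eq_zetaTail, cosMomentRatio,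
      mul_div_cancel₀ _ (cosMoment_zero_pos _).ne']
  rw [hcos, cosMoment_two_mul_zero, Nat.centralBinom_eq_two_mul_choose] at harccos
  change arccosMoment (2 * n - 1) (2 * b + 1) = _
  have hn' : (n : ℝ) ≠ 0 := mod_cast hn.ne'
  field_simp at harccos ⊢
  linear_combination harccos
end

section
/- For all nonnegative integers a, b: ∫₀¹ (2 arcsin x)^(2a+2)/((2a+2)! · x) · (2 arccos x)^(2b+1)/(2b+1)! dx = (π/2) · H(a,b), where H(a,b) = ζ(2,...,2,3,2,...,2) with a twos before the 3 and b twos after. -/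
open Real

/-- `∑_{0 < n₁ < ⋯ < n_a < n} 1/(n₁² ⋯ n_a²)`; equals `1` when `a = 0`. -/
noncomputable def zetaHead (a n : ℕ) : ℝ :=
  ∑' f : {f : Fin a → ℕ // StrictMono f ∧ ∀ i, 0 < f i ∧ f i < n},
    ∏ i, 1 / ((f.1 i : ℝ)) ^ 2

/-- The multiple zeta value `ζ(2,…,2,3,2,…,2)` with `a` twos before the `3` and `b` after. -/
noncomputable def H (a b : ℕ) : ℝ :=
  ∑' n : ℕ+, (1 / (n : ℝ) ^ 3) * zetaHead a n * zetaTail b n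

/-!
Substituting `x = sin t` turns the integral into
`∫₀^{π/2} (2t)^(2a+2)/(2a+2)! * cot t * (π-2t)^(2b+1)/(2b+1)! dt`. Both powers are governed by the
functions `u_n = 4^n / C(2n,n) * sin^{2n} t`, which satisfy `u''_{n+1} = 4 (n+1)² (u_n - u_{n+1})`.

* Let `c_{a,n}` be the sum of `1/(n₁² ⋯ n_a²)` over `n₁ < ⋯ < n_a = n`. By summation by parts the
  series `S_a = ∑ c_{a,n} u_n` formally satisfy `S''_{a+1} = 4 S_a`, just like `(2t)^(2a)/(2a)!`.
  The error of the `N`-th partial sum satisfies the same equation up to the source term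
  `4 ζ_{≤N}({2}^a) u_N`, which is nonnegative and tends to `0`, and so the series converges to
  `(2t)^(2a)/(2a)!` on `[0, π/2)`.
* Integrating by parts twice against `(π-2t)^(2b)/(2b)!` shows that the moments
  `(2/π) ∫₀^{π/2} u_n (π-2t)^(2b)/(2b)! dt` obey the recursion in `b` and `n` that characterizes
  the tails `∑_{n < m₁ < ⋯ < m_b} 1/(m₁² ⋯ m_b²)`.

Since `2 n u_n cot t = u'_n`, expanding `(2t)^(2a+2)/(2a+2)!` and integrating term by term leaves
one more integration by parts and gives `(π/2) ∑ n⁻³ ζ_{<n}({2}^a) ζ_{>n}({2}^b)`.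
-/

open Filter Topology Set MeasureTheory Interval

section ChainSums

/-- Index type of the chain sums with all entries strictly between `0` and `n`, as in `zetaHead`. -/
abbrev HeadIndex (a n : ℕ) : Type :=
  {f : Fin a → ℕ // StrictMono f ∧ ∀ i, 0 < f i ∧ f i < n}

/-- Index type of the chain sums with all entries greater than `n`, as in `zetaTail`. -/
abbrev TailIndex (b n : ℕ) : Type :=
  {f : Fin b → ℕ // StrictMono f ∧ ∀ i, n < f i}

instance finite_headIndex (a n : ℕ) : Finite (HeadIndex a n) :=
  Finite.of_injective (β := Fin a → Fin n) (fun f i ↦ ⟨f.1 i, (f.2.2 i).2⟩) fun _ _ h ↦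
    Subtype.ext <| funext fun i ↦ congrArg Fin.val (congrFun h i)

/-- Splitting a chain below `n` into its last entry and the chain below that entry. -/
def headIndexSnocEquiv (a n : ℕ) : (Σ m : Finset.Ioo 0 n, HeadIndex a m) ≃ HeadIndex (a + 1) n where
  toFun p := ⟨Fin.snoc (α := fun _ ↦ ℕ) p.2.1 p.1.1, by
    obtain ⟨⟨m, hm⟩, f, hf, hfm⟩ := p
    rw [Finset.mem_Ioo] at hm
    refine ⟨?_, Fin.lastCases (by simpa using hm)
      fun i ↦ by simpa using ⟨(hfm i).1, (hfm i).2.trans hm.2⟩⟩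
    rw [← Fin.insertNth_last', Fin.strictMono_insertNth_iff]
    exact ⟨hf, fun i _ ↦ (hfm i).2, fun i hi ↦ absurd hi (Fin.castSucc_lt_last i).not_ge⟩⟩
  invFun f := ⟨⟨f.1 (Fin.last a), Finset.mem_Ioo.2 (f.2.2 _)⟩, Fin.init f.1,
    fun _ _ h ↦ f.2.1 (Fin.castSucc_lt_castSucc_iff.2 h),
    fun i ↦ ⟨(f.2.2 _).1, f.2.1 (Fin.castSucc_lt_last i)⟩⟩
  left_inv p := Sigma.subtype_ext (Subtype.ext (by simp)) (by simp)
  right_inv f := Subtype.ext (Fin.snoc_init_self f.1)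

/-- Splitting a chain above `n` into its first entry `n + j + 1` and the chain above that entry. -/
def tailIndexConsEquiv (b n : ℕ) : (Σ j : ℕ, TailIndex b (n + j + 1)) ≃ TailIndex (b + 1) n where
  toFun p := ⟨Fin.cons (n + p.1 + 1) p.2.1, Fin.strictMono_cons.2 ⟨p.2.2.2, p.2.2.1⟩,
    Fin.cases (by simp) fun i ↦ by have := p.2.2.2 i; simp; omega⟩
  invFun f := ⟨f.1 0 - (n + 1), Fin.tail f.1,
    fun _ _ h ↦ f.2.1 (Fin.succ_lt_succ_iff.2 h), fun i ↦ by
      have h₀ := f.2.2 0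
      have h₁ := f.2.1 (Fin.succ_pos i)
      simp only [Fin.tail]
      omega⟩
  left_inv p := Sigma.subtype_ext (by simp) (by simp)
  right_inv f := Subtype.ext <| by
    have h : n + (f.1 0 - (n + 1)) + 1 = f.1 0 := by have := f.2.2 0; omega
    simp only [h]
    exact Fin.cons_self_tail f.1

lemma tsum_headIndex_prod_succ (w : ℕ → ℝ) (a n : ℕ) :
    ∑' f : HeadIndex (a + 1) n, ∏ i, w (f.1 i) =
      ∑ m ∈ Finset.Ioo 0 n, (∑' f : HeadIndex a m, ∏ i, w (f.1 i)) * w m := by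
  rw [← (headIndexSnocEquiv a n).tsum_eq, Summable.tsum_sigma Summable.of_finite,
    ← Finset.tsum_subtype (Finset.Ioo 0 n) fun m ↦ (∑' f : HeadIndex a m, ∏ i, w (f.1 i)) * w m]
  simp only [headIndexSnocEquiv, Equiv.coe_fn_mk, Fin.prod_univ_castSucc, Fin.snoc_castSucc,
    Fin.snoc_last, tsum_mul_right]

lemma hasSum_nat_add_succ_of_sub_eq {T g : ℕ → ℝ} (hg : ∀ m, 0 ≤ g m)
    (hstep : ∀ m, T m - T (m + 1) = g (m + 1)) (hlim : Tendsto T atTop (𝓝 0)) (n : ℕ) :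
    HasSum (fun j ↦ g (n + j + 1)) (T n) := by
  rw [hasSum_iff_tendsto_nat_of_nonneg fun j ↦ hg _]
  have hsum : ∀ N, ∑ j ∈ Finset.range N, g (n + j + 1) = T n - T (n + N) := fun N ↦ by
    simp only [← hstep]
    exact Finset.sum_range_sub' (fun j ↦ T (n + j)) N
  simp only [hsum]
  have hlim' : Tendsto (fun N ↦ T (n + N)) atTop (𝓝 0) := by
    simpa only [add_comm] using (tendsto_add_atTop_iff_nat n).2 hlim
  simpa only [sub_zero] using hlim'.const_sub (T n)

lemma hasSum_tailIndex_prod_succ {w : ℕ → ℝ} (hw : ∀ m, 0 ≤ w m) {b n : ℕ} {T : ℕ → ℝ} {s : ℝ}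
    (hT : ∀ m, HasSum (fun f : TailIndex b m ↦ ∏ i, w (f.1 i)) (T m))
    (hs : HasSum (fun j ↦ w (n + j + 1) * T (n + j + 1)) s) :
    HasSum (fun f : TailIndex (b + 1) n ↦ ∏ i, w (f.1 i)) s := by
  have hcomp : (fun f : TailIndex (b + 1) n ↦ ∏ i, w (f.1 i)) ∘ tailIndexConsEquiv b n =
      fun p ↦ w (n + p.1 + 1) * ∏ i, w (p.2.1 i) := by
    funext p
    simp only [Function.comp_apply, tailIndexConsEquiv, Equiv.coe_fn_mk, Fin.prod_univ_succ,
      Fin.cons_zero, Fin.cons_succ]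
  have hfiber : ∀ j, HasSum (fun f : TailIndex b (n + j + 1) ↦
      w (n + j + 1) * ∏ i, w (f.1 i)) (w (n + j + 1) * T (n + j + 1)) :=
    fun j ↦ (hT _).mul_left _
  rw [← (tailIndexConsEquiv b n).hasSum_iff, hcomp]
  have hsummable : Summable fun p : Σ j : ℕ, TailIndex b (n + j + 1) ↦
      w (n + p.1 + 1) * ∏ i, w (p.2.1 i) := by
    rw [summable_sigma_of_nonneg fun p ↦ mul_nonneg (hw _) (Finset.prod_nonneg fun i _ ↦ hw _)]
    refine ⟨fun j ↦ (hfiber j).summable, ?_⟩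
    simpa only [fun j ↦ (hfiber j).tsum_eq] using hs.summable
  have hsigma := hsummable.hasSum
  rwa [(hsigma.sigma hfiber).unique hs] at hsigma

lemma hasSum_tailIndex_prod_of_sub_eq {w : ℕ → ℝ} (hw : ∀ m, 0 ≤ w m) {T : ℕ → ℕ → ℝ}
    (hzero : ∀ n, T 0 n = 1)
    (hstep : ∀ b n, T (b + 1) n - T (b + 1) (n + 1) = w (n + 1) * T b (n + 1))
    (hlim : ∀ b, Tendsto (T (b + 1)) atTop (𝓝 0)) (b n : ℕ) :
    HasSum (fun f : TailIndex b n ↦ ∏ i, w (f.1 i)) (T b n) := by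
  induction b generalizing n with
  | zero =>
    have : Unique (TailIndex 0 n) :=
      ⟨⟨Fin.elim0, fun i ↦ i.elim0, fun i ↦ i.elim0⟩, fun f ↦ Subtype.ext (Subsingleton.elim _ _)⟩
    have hsum := hasSum_unique fun f : TailIndex 0 n ↦ ∏ i, w (f.1 i)
    rwa [Fin.prod_univ_zero, ← hzero n] at hsum
  | succ b ih =>
    have hT : ∀ m, 0 ≤ T b m := fun m ↦
      (ih m).nonneg fun f ↦ Finset.prod_nonneg fun i _ ↦ hw _
    exact hasSum_tailIndex_prod_succ hw ih <| hasSum_nat_add_succ_of_sub_eq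
      (g := fun m ↦ w m * T b m) (fun m ↦ mul_nonneg (hw m) (hT m)) (hstep b) (hlim b) n

lemma zetaHead_nonneg (a n : ℕ) : 0 ≤ zetaHead a n :=
  tsum_nonneg fun f ↦ Finset.prod_nonneg fun i _ ↦ by positivity

lemma zetaHead_zero (n : ℕ) : zetaHead 0 n = 1 := by
  have : Unique (HeadIndex 0 n) :=
    ⟨⟨Fin.elim0, fun i ↦ i.elim0, fun i ↦ i.elim0⟩, fun f ↦ Subtype.ext (Subsingleton.elim _ _)⟩
  simp [zetaHead]

lemma zetaHead_succ (a n : ℕ) :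
    zetaHead (a + 1) n = ∑ m ∈ Finset.range n, zetaHead a m / (m : ℝ) ^ 2 := by
  have hIoo : zetaHead (a + 1) n = ∑ m ∈ Finset.Ioo 0 n, zetaHead a m * (1 / (m : ℝ) ^ 2) :=
    tsum_headIndex_prod_succ (fun m ↦ 1 / (m : ℝ) ^ 2) a n
  simp only [hIoo, mul_one_div]
  refine Finset.sum_subset (fun m hm ↦ Finset.mem_range.2 (Finset.mem_Ioo.1 hm).2) ?_
  intro m hm hm'
  obtain rfl : m = 0 := by simp at hm hm'; omega
  simp

end ChainSums

section SecondDerivative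

variable {f f' f'' : ℝ → ℝ} {a b : ℝ}

lemma monotoneOn_Icc_of_deriv2_nonneg (hf : ∀ t, HasDerivAt f (f' t) t)
    (hf' : ∀ t, HasDerivAt f' (f'' t) t) (ha : 0 ≤ f' a) (hf'' : ∀ t ∈ Icc a b, 0 ≤ f'' t) :
    MonotoneOn f (Icc a b) := by
  have hmono : MonotoneOn f' (Icc a b) :=
    monotoneOn_of_hasDerivWithinAt_nonneg (convex_Icc a b)
      (fun t _ ↦ (hf' t).continuousAt.continuousWithinAt) (fun t _ ↦ (hf' t).hasDerivWithinAt)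
      fun t ht ↦ hf'' t (interior_subset ht)
  refine monotoneOn_of_hasDerivWithinAt_nonneg (convex_Icc a b)
    (fun t _ ↦ (hf t).continuousAt.continuousWithinAt) (fun t _ ↦ (hf t).hasDerivWithinAt)
    fun t ht ↦ ?_
  obtain ⟨hat, htb⟩ := interior_subset ht
  exact ha.trans (hmono (left_mem_Icc.2 (hat.trans htb)) ⟨hat, htb⟩ hat)

lemma le_half_mul_sq_of_deriv2_le {M : ℝ} (hab : a ≤ b) (hf : ∀ t, HasDerivAt f (f' t) t)
    (hf' : ∀ t, HasDerivAt f' (f'' t) t) (hfa : f a = 0) (hfa' : f' a = 0)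
    (hM : ∀ t ∈ Icc a b, f'' t ≤ M) : f b ≤ M / 2 * (b - a) ^ 2 := by
  have hquad : ∀ t, HasDerivAt (fun t ↦ M / 2 * (t - a) ^ 2) (M * (t - a)) t := fun t ↦ by
    have h := (((hasDerivAt_id t).sub_const a).pow 2).const_mul (M / 2)
    exact h.congr_deriv (by simp only [id_eq]; push_cast; ring)
  have hlin : ∀ t, HasDerivAt (fun t ↦ M * (t - a)) M t := fun t ↦ by
    simpa only [mul_one] using ((hasDerivAt_id' t).sub_const a).const_mul M
  have hmono := monotoneOn_Icc_of_deriv2_nonneg (fun t ↦ (hquad t).sub (hf t))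
    (fun t ↦ (hlin t).sub (hf' t)) (by simp [hfa']) fun t ht ↦ sub_nonneg.2 (hM t ht)
  have hle := hmono (left_mem_Icc.2 hab) (right_mem_Icc.2 hab) hab
  simpa [hfa] using hle

end SecondDerivative

section DividedPower

/-- The divided power `(2t)^k / k!` of `2t`, the form in which powers of `2 arcsin x` and
`2 arccos x` enter the integrand. -/
noncomputable def dpowTwoMul (k : ℕ) (t : ℝ) : ℝ := (2 * t) ^ k / k.factorial

lemma dpowTwoMul_zero_left (t : ℝ) : dpowTwoMul 0 t = 1 := by simp [dpowTwoMul]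

lemma dpowTwoMul_succ_zero (k : ℕ) : dpowTwoMul (k + 1) 0 = 0 := by simp [dpowTwoMul]

lemma dpowTwoMul_nonneg (k : ℕ) {t : ℝ} (ht : 0 ≤ t) : 0 ≤ dpowTwoMul k t := by
  unfold dpowTwoMul; positivity

@[fun_prop]
lemma continuous_dpowTwoMul (k : ℕ) : Continuous (dpowTwoMul k) := by
  unfold dpowTwoMul; fun_prop

lemma hasDerivAt_dpowTwoMul_succ (k : ℕ) (t : ℝ) :
    HasDerivAt (dpowTwoMul (k + 1)) (2 * dpowTwoMul k t) t := by
  have h := (((hasDerivAt_id' t).const_mul 2).pow (k + 1)).div_const ((k + 1).factorial : ℝ)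
  refine h.congr_deriv ?_
  rw [dpowTwoMul, Nat.factorial_succ]
  push_cast
  field_simp

lemma dpowTwoMul_add_two_le (k : ℕ) {t : ℝ} (h₀ : 0 ≤ t) (h₁ : t ≤ π / 2) :
    dpowTwoMul (k + 2) t ≤ π ^ (k + 2) * sin t ^ 2 := by
  have hsin : 2 * t ≤ π * sin t := by
    have h := mul_le_mul_of_nonneg_left (mul_le_sin h₀ h₁) pi_pos.le
    calc 2 * t = π * (2 / π * t) := by field_simp
      _ ≤ π * sin t := h
  calc dpowTwoMul (k + 2) t ≤ (2 * t) ^ (k + 2) :=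
        div_le_self (by positivity) (mod_cast (k + 2).factorial_pos)
    _ = (2 * t) ^ k * (2 * t) ^ 2 := pow_add _ _ _
    _ ≤ π ^ k * (π * sin t) ^ 2 := by gcongr; linarith
    _ = π ^ (k + 2) * sin t ^ 2 := by ring

lemma integral_deriv_mul_dpowTwoMul_succ {f f' : ℝ → ℝ} {c : ℝ} (hf : ∀ t, HasDerivAt f (f' t) t)
    (hf' : Continuous f') (hf₀ : f 0 = 0) (k : ℕ) :
    ∫ t in 0..c, f' t * dpowTwoMul (k + 1) (c - t) =
      2 * ∫ t in 0..c, f t * dpowTwoMul k (c - t) := by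
  have hg : ∀ t, HasDerivAt (fun t ↦ dpowTwoMul (k + 1) (c - t)) (-(2 * dpowTwoMul k (c - t))) t :=
    fun t ↦ by
      simpa [Function.comp_def] using
        (hasDerivAt_dpowTwoMul_succ k (c - t)).comp t ((hasDerivAt_id' t).const_sub c)
  have hparts := intervalIntegral.integral_mul_deriv_eq_deriv_mul (a := 0) (b := c)
    (fun t _ ↦ hg t) (fun t _ ↦ hf t) ((by fun_prop : Continuous _).intervalIntegrable 0 c)
    (hf'.intervalIntegrable 0 c)
  simp only [sub_self, dpowTwoMul_succ_zero, zero_mul, hf₀, mul_zero, neg_mul,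
    intervalIntegral.integral_neg, zero_sub, neg_neg, mul_assoc,
    intervalIntegral.integral_const_mul] at hparts
  simpa only [mul_comm] using hparts

end DividedPower

section WallisSin

/-- The factor `4^n / C(2n,n) = ∏ 2k/(2k-1)` of Wallis' formula. -/
noncomputable def wallisFactor (n : ℕ) : ℝ := 4 ^ n / n.centralBinom

lemma wallisFactor_pos (n : ℕ) : 0 < wallisFactor n :=
  div_pos (by positivity) (mod_cast n.centralBinom_pos)

lemma wallisFactor_succ (n : ℕ) :
    wallisFactor (n + 1) * (2 * n + 1) = wallisFactor n * (2 * n + 2) := by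
  have hrec : ((n : ℝ) + 1) * (n + 1).centralBinom = 2 * (2 * n + 1) * n.centralBinom :=
    mod_cast n.succ_mul_centralBinom_succ
  have h₀ : (n.centralBinom : ℝ) ≠ 0 := mod_cast n.centralBinom_ne_zero
  have h₁ : ((n + 1).centralBinom : ℝ) ≠ 0 := mod_cast (n + 1).centralBinom_ne_zero
  simp only [wallisFactor]
  field_simp
  linear_combination (-2 * 4 ^ n : ℝ) * hrec

lemma one_le_wallisFactor (n : ℕ) : 1 ≤ wallisFactor n := by
  rw [wallisFactor, one_le_div (mod_cast n.centralBinom_pos)]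
  exact_mod_cast n.centralBinom_le_four_pow

lemma wallisFactor_le (n : ℕ) : wallisFactor n ≤ 2 * n + 1 := by
  rw [wallisFactor, div_le_iff₀ (mod_cast n.centralBinom_pos), Nat.centralBinom_eq_two_mul_choose]
  exact_mod_cast n.four_pow_le_two_mul_add_one_mul_central_binom

/-- The function `4^n / C(2n,n) * sin^{2n} t`. With this normalization the family satisfies
`u''_{n+1} = 4 (n+1)² (u_n - u_{n+1})`. -/
noncomputable def wallisSin (n : ℕ) (t : ℝ) : ℝ := wallisFactor n * sin t ^ (2 * n)

/-- The derivative of `wallisSin n`; the truncated exponent at `n = 0` is harmless because of the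
factor `2 * n`. -/
noncomputable def wallisSinDeriv (n : ℕ) (t : ℝ) : ℝ :=
  wallisFactor n * (2 * n * sin t ^ (2 * n - 1) * cos t)

@[fun_prop]
lemma continuous_wallisSin (n : ℕ) : Continuous (wallisSin n) := by
  unfold wallisSin; fun_prop

@[fun_prop]
lemma continuous_wallisSinDeriv (n : ℕ) : Continuous (wallisSinDeriv n) := by
  unfold wallisSinDeriv; fun_prop

lemma hasDerivAt_wallisSin (n : ℕ) (t : ℝ) : HasDerivAt (wallisSin n) (wallisSinDeriv n t) t := by
  refine (((hasDerivAt_sin t).pow (2 * n)).const_mul (wallisFactor n)).congr_deriv ?_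
  rw [wallisSinDeriv]
  push_cast
  ring

lemma wallisSinDeriv_succ (n : ℕ) (t : ℝ) :
    wallisSinDeriv (n + 1) t =
      2 * (n + 1) * wallisFactor (n + 1) * (sin t ^ (2 * n + 1) * cos t) := by
  rw [wallisSinDeriv, show 2 * (n + 1) - 1 = 2 * n + 1 by omega]
  push_cast
  ring

lemma hasDerivAt_wallisSinDeriv_succ (n : ℕ) (t : ℝ) :
    HasDerivAt (wallisSinDeriv (n + 1))
      (4 * (n + 1) ^ 2 * (wallisSin n t - wallisSin (n + 1) t)) t := by
  rw [funext (wallisSinDeriv_succ n)]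
  have hderiv := (((hasDerivAt_sin t).pow (2 * n + 1)).mul (hasDerivAt_cos t)).const_mul
    (2 * (n + 1) * wallisFactor (n + 1))
  refine hderiv.congr_deriv ?_
  simp only [wallisSin, Pi.pow_apply, Nat.add_sub_cancel, show 2 * (n + 1) = 2 * n + 1 + 1 by ring,
    pow_succ _ (2 * n), pow_succ _ (2 * n + 1)]
  push_cast
  linear_combination 2 * (n + 1) * sin t ^ (2 * n) * wallisFactor_succ n +
    2 * (n + 1) * (2 * n + 1) * wallisFactor (n + 1) * sin t ^ (2 * n) * cos_sq' t

lemma wallisSin_zero_left (t : ℝ) : wallisSin 0 t = 1 := by simp [wallisSin, wallisFactor]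

lemma wallisSin_succ_zero (n : ℕ) : wallisSin (n + 1) 0 = 0 := by simp [wallisSin]

lemma wallisSinDeriv_zero (n : ℕ) : wallisSinDeriv n 0 = 0 := by
  cases n with
  | zero => simp [wallisSinDeriv]
  | succ n => simp [wallisSinDeriv_succ]

lemma wallisSinDeriv_pi_div_two (n : ℕ) : wallisSinDeriv n (π / 2) = 0 := by simp [wallisSinDeriv]

lemma wallisSin_nonneg (n : ℕ) (t : ℝ) : 0 ≤ wallisSin n t :=
  mul_nonneg (wallisFactor_pos n).le (even_two_mul n |>.pow_nonneg _)

lemma monotoneOn_wallisSin (n : ℕ) : MonotoneOn (wallisSin n) (Icc 0 (π / 2)) := by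
  intro s hs t ht hst
  have hsin : 0 ≤ sin s := sin_nonneg_of_mem_Icc ⟨hs.1, by linarith [hs.2, pi_pos]⟩
  exact mul_le_mul_of_nonneg_left (pow_le_pow_left₀ hsin
    (sin_le_sin_of_le_of_le_pi_div_two (by linarith [hs.1, pi_pos]) ht.2 hst) _)
    (wallisFactor_pos n).le

lemma tendsto_wallisSin {t : ℝ} (ht : t ∈ Ico 0 (π / 2)) :
    Tendsto (fun n ↦ wallisSin n t) atTop (𝓝 0) := by
  have hsin : 0 ≤ sin t := sin_nonneg_of_mem_Icc ⟨ht.1, by linarith [ht.2, pi_pos]⟩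
  have hsin_lt : sin t < 1 := by
    simpa using sin_lt_sin_of_lt_of_le_pi_div_two (by linarith [ht.1, pi_pos]) le_rfl ht.2
  have hsq : sin t ^ 2 < 1 := pow_lt_one₀ hsin hsin_lt two_ne_zero
  have hdom : Tendsto (fun n : ℕ ↦ 2 * ((n : ℝ) * (sin t ^ 2) ^ n) + (sin t ^ 2) ^ n)
      atTop (𝓝 0) := by
    simpa using ((tendsto_self_mul_const_pow_of_lt_one (sq_nonneg _) hsq).const_mul 2).add
      (tendsto_pow_atTop_nhds_zero_of_lt_one (sq_nonneg _) hsq)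
  refine squeeze_zero (fun n ↦ wallisSin_nonneg n t) (fun n ↦ ?_) hdom
  calc wallisSin n t = wallisFactor n * (sin t ^ 2) ^ n := by rw [wallisSin, pow_mul]
    _ ≤ (2 * n + 1) * (sin t ^ 2) ^ n := by gcongr; exact wallisFactor_le n
    _ = 2 * (n * (sin t ^ 2) ^ n) + (sin t ^ 2) ^ n := by ring

lemma wallisSinDeriv_nonneg (n : ℕ) {t : ℝ} (ht : t ∈ Icc 0 (π / 2)) : 0 ≤ wallisSinDeriv n t := by
  have hsin : 0 ≤ sin t := sin_nonneg_of_mem_Icc ⟨ht.1, by linarith [ht.2, pi_pos]⟩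
  have hcos : 0 ≤ cos t := cos_nonneg_of_mem_Icc ⟨by linarith [ht.1, pi_pos], ht.2⟩
  have := wallisFactor_pos n
  unfold wallisSinDeriv
  positivity

lemma wallisSinDeriv_eq_mul_cot (n : ℕ) {t : ℝ} (ht : sin t ≠ 0) :
    wallisSinDeriv n t = 2 * n * (wallisSin n t * cot t) := by
  cases n with
  | zero => simp [wallisSinDeriv]
  | succ n =>
    rw [wallisSinDeriv_succ, wallisSin, cot_eq_cos_div_sin]
    push_cast
    field_simp
    ring

end WallisSin

section ArcsinSeries

/-- The coefficients of `(2t)^(2a) / (2a)!` in its expansion along `wallisSin n t`. For `a > 0` this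
is the sum of `1/(n₁² ⋯ n_a²)` over `0 < n₁ < ⋯ < n_a = n`; in particular the value at `n = 0` is
the correct `0`, by the convention `x / 0 = 0`. -/
noncomputable def headCoeff : ℕ → ℕ → ℝ
  | 0, n => if n = 0 then 1 else 0
  | a + 1, n => zetaHead a n / (n : ℝ) ^ 2

lemma headCoeff_nonneg (a n : ℕ) : 0 ≤ headCoeff a n := by
  cases a with
  | zero => rw [headCoeff]; split <;> norm_num
  | succ a => exact div_nonneg (zetaHead_nonneg a n) (sq_nonneg _)

lemma headCoeff_succ_zero (a : ℕ) : headCoeff (a + 1) 0 = 0 := by simp [headCoeff]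

lemma sum_range_headCoeff (a n : ℕ) :
    ∑ m ∈ Finset.range (n + 1), headCoeff a m = zetaHead a (n + 1) := by
  cases a with
  | zero => simp [headCoeff, zetaHead_zero]
  | succ a => rw [zetaHead_succ]; rfl

/-- The error in approximating `(2t)^(2a) / (2a)!` by the terms `n ≤ N` of its expansion along
`wallisSin n t`. -/
noncomputable def arcsinRemainder (a N : ℕ) (t : ℝ) : ℝ :=
  dpowTwoMul (2 * a) t - ∑ n ∈ Finset.range (N + 1), headCoeff a n * wallisSin n t

/-- The derivative of `arcsinRemainder (a + 1) N`. -/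
noncomputable def arcsinRemainderDeriv (a N : ℕ) (t : ℝ) : ℝ :=
  2 * dpowTwoMul (2 * a + 1) t -
    ∑ n ∈ Finset.range (N + 1), headCoeff (a + 1) n * wallisSinDeriv n t

lemma arcsinRemainder_zero_left (N : ℕ) (t : ℝ) : arcsinRemainder 0 N t = 0 := by
  simp [arcsinRemainder, headCoeff, dpowTwoMul_zero_left, wallisSin_zero_left]

lemma arcsinRemainder_succ_zero (a N : ℕ) : arcsinRemainder (a + 1) N 0 = 0 := by
  simp [arcsinRemainder, Finset.sum_range_succ', headCoeff_succ_zero, wallisSin_succ_zero,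
    dpowTwoMul_succ_zero, mul_add]

lemma arcsinRemainderDeriv_zero (a N : ℕ) : arcsinRemainderDeriv a N 0 = 0 := by
  simp [arcsinRemainderDeriv, dpowTwoMul_succ_zero, wallisSinDeriv_zero]

lemma hasDerivAt_arcsinRemainder_succ (a N : ℕ) (t : ℝ) :
    HasDerivAt (arcsinRemainder (a + 1) N) (arcsinRemainderDeriv a N t) t :=
  (hasDerivAt_dpowTwoMul_succ (2 * a + 1) t).sub <|
    HasDerivAt.fun_sum fun n _ ↦ (hasDerivAt_wallisSin n t).const_mul _

lemma hasDerivAt_sum_headCoeff_mul_wallisSinDeriv (a N : ℕ) (t : ℝ) :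
    HasDerivAt (fun t ↦ ∑ n ∈ Finset.range (N + 1), headCoeff (a + 1) n * wallisSinDeriv n t)
      (4 * (∑ n ∈ Finset.range (N + 1), headCoeff a n * wallisSin n t -
        zetaHead a (N + 1) * wallisSin N t)) t := by
  induction N with
  | zero => simpa [headCoeff_succ_zero, ← sum_range_headCoeff] using hasDerivAt_const t (0 : ℝ)
  | succ N ih =>
    simp only [Finset.sum_range_succ _ (N + 1)]
    refine (ih.add ((hasDerivAt_wallisSinDeriv_succ N t).const_mul _)).congr_deriv ?_
    rw [headCoeff, ← sum_range_headCoeff a (N + 1), Finset.sum_range_succ _ (N + 1),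
      sum_range_headCoeff]
    push_cast
    field_simp
    ring

lemma hasDerivAt_arcsinRemainderDeriv (a N : ℕ) (t : ℝ) :
    HasDerivAt (arcsinRemainderDeriv a N)
      (4 * (arcsinRemainder a N t + zetaHead a (N + 1) * wallisSin N t)) t := by
  refine (((hasDerivAt_dpowTwoMul_succ (2 * a) t).const_mul 2).sub
    (hasDerivAt_sum_headCoeff_mul_wallisSinDeriv a N t)).congr_deriv ?_
  rw [arcsinRemainder]
  ring

lemma zetaHead_mul_wallisSin_nonneg (a n N : ℕ) (t : ℝ) : 0 ≤ zetaHead a n * wallisSin N t :=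
  mul_nonneg (zetaHead_nonneg a n) (wallisSin_nonneg N t)

lemma monotoneOn_and_nonneg_arcsinRemainder (a N : ℕ) (c : ℝ) :
    MonotoneOn (arcsinRemainder a N) (Icc 0 c) ∧ ∀ t ∈ Icc 0 c, 0 ≤ arcsinRemainder a N t := by
  induction a with
  | zero =>
    simp only [funext (arcsinRemainder_zero_left N), le_rfl, implies_true, and_true]
    exact monotoneOn_const
  | succ a ih =>
    have hmono := monotoneOn_Icc_of_deriv2_nonneg (b := c) (hasDerivAt_arcsinRemainder_succ a N)
      (hasDerivAt_arcsinRemainderDeriv a N) (arcsinRemainderDeriv_zero a N).ge fun t ht ↦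
        mul_nonneg zero_le_four (add_nonneg (ih.2 t ht) (zetaHead_mul_wallisSin_nonneg a _ N t))
    refine ⟨hmono, fun t ht ↦ ?_⟩
    rw [← arcsinRemainder_succ_zero a N]
    exact hmono (left_mem_Icc.2 (ht.1.trans ht.2)) ht ht.1

lemma zetaHead_le_dpowTwoMul (a N : ℕ) : zetaHead a (N + 1) ≤ dpowTwoMul (2 * a) (π / 2) := by
  have hrem : 0 ≤ arcsinRemainder a N (π / 2) :=
    (monotoneOn_and_nonneg_arcsinRemainder a N _).2 _ (right_mem_Icc.2 (by positivity))
  calc zetaHead a (N + 1) = ∑ n ∈ Finset.range (N + 1), headCoeff a n :=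
        (sum_range_headCoeff a N).symm
    _ ≤ ∑ n ∈ Finset.range (N + 1), headCoeff a n * wallisSin n (π / 2) := by
        refine Finset.sum_le_sum fun n _ ↦ le_mul_of_one_le_right (headCoeff_nonneg a n) ?_
        simpa [wallisSin] using one_le_wallisFactor n
    _ ≤ dpowTwoMul (2 * a) (π / 2) := sub_nonneg.1 hrem

lemma arcsinRemainder_succ_le (a N : ℕ) {t : ℝ} (ht : t ∈ Icc 0 (π / 2)) :
    arcsinRemainder (a + 1) N t ≤
      2 * t ^ 2 * (arcsinRemainder a N t + dpowTwoMul (2 * a) (π / 2) * wallisSin N t) := by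
  have hsub : Icc 0 t ⊆ Icc 0 (π / 2) := Icc_subset_Icc_right ht.2
  have hbound : ∀ s ∈ Icc 0 t,
      4 * (arcsinRemainder a N s + zetaHead a (N + 1) * wallisSin N s) ≤
        4 * (arcsinRemainder a N t + dpowTwoMul (2 * a) (π / 2) * wallisSin N t) := by
    intro s hs
    have hrem := (monotoneOn_and_nonneg_arcsinRemainder a N _).1 (hsub hs) ht hs.2
    have hzeta := mul_le_mul (zetaHead_le_dpowTwoMul a N)
      (monotoneOn_wallisSin N (hsub hs) ht hs.2) (wallisSin_nonneg N s)
      (dpowTwoMul_nonneg _ (by positivity))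
    gcongr
  have hle := le_half_mul_sq_of_deriv2_le ht.1 (hasDerivAt_arcsinRemainder_succ a N)
    (hasDerivAt_arcsinRemainderDeriv a N) (arcsinRemainder_succ_zero a N)
    (arcsinRemainderDeriv_zero a N) hbound
  linarith

lemma tendsto_arcsinRemainder (a : ℕ) {t : ℝ} (ht : t ∈ Ico 0 (π / 2)) :
    Tendsto (fun N ↦ arcsinRemainder a N t) atTop (𝓝 0) := by
  have ht' : t ∈ Icc 0 (π / 2) := Ico_subset_Icc_self ht
  induction a with
  | zero => simp only [arcsinRemainder_zero_left, tendsto_const_nhds]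
  | succ a ih =>
    refine squeeze_zero (fun N ↦ (monotoneOn_and_nonneg_arcsinRemainder (a + 1) N _).2 t ht')
      (fun N ↦ arcsinRemainder_succ_le a N ht') ?_
    simpa using (ih.add ((tendsto_wallisSin ht).const_mul (dpowTwoMul (2 * a) (π / 2)))).const_mul
      (2 * t ^ 2)

lemma hasSum_headCoeff_mul_wallisSin (a : ℕ) {t : ℝ} (ht : t ∈ Ico 0 (π / 2)) :
    HasSum (fun n ↦ headCoeff a n * wallisSin n t) (dpowTwoMul (2 * a) t) := by
  rw [hasSum_iff_tendsto_nat_of_nonneg fun n ↦ mul_nonneg (headCoeff_nonneg a n)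
    (wallisSin_nonneg n t), ← tendsto_add_atTop_iff_nat 1]
  simpa [arcsinRemainder] using (tendsto_arcsinRemainder a ht).const_sub (dpowTwoMul (2 * a) t)

end ArcsinSeries

section WallisMoment

/-- The normalized moment `(2/π) ∫₀^{π/2} u_n(t) (π - 2t)^(2b) / (2b)! dt` of `u_n = wallisSin n`,
which turns out to be `zetaTail b n`. -/
noncomputable def wallisMoment (b n : ℕ) : ℝ :=
  2 / π * ∫ t in 0..π / 2, wallisSin n t * dpowTwoMul (2 * b) (π / 2 - t)

lemma wallisMoment_nonneg (b n : ℕ) : 0 ≤ wallisMoment b n :=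
  mul_nonneg (by positivity) <| intervalIntegral.integral_nonneg (by positivity) fun t ht ↦
    mul_nonneg (wallisSin_nonneg n t) (dpowTwoMul_nonneg _ (sub_nonneg.2 ht.2))

lemma integral_wallisSin_succ (n : ℕ) :
    ∫ t in 0..π / 2, wallisSin (n + 1) t = ∫ t in 0..π / 2, wallisSin n t := by
  have hftc := intervalIntegral.integral_eq_sub_of_hasDerivAt (a := 0) (b := π / 2)
    (fun t _ ↦ hasDerivAt_wallisSinDeriv_succ n t) (Continuous.intervalIntegrable (by fun_prop) _ _)
  rw [wallisSinDeriv_zero, wallisSinDeriv_pi_div_two, sub_zero,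
    intervalIntegral.integral_const_mul, intervalIntegral.integral_sub
      ((continuous_wallisSin n).intervalIntegrable _ _)
      ((continuous_wallisSin (n + 1)).intervalIntegrable _ _)] at hftc
  exact (sub_eq_zero.1 ((mul_eq_zero.1 hftc).resolve_left (by positivity))).symm

lemma integral_wallisSin (n : ℕ) : ∫ t in 0..π / 2, wallisSin n t = π / 2 := by
  induction n with
  | zero => simp [wallisSin_zero_left]
  | succ n ih => rw [integral_wallisSin_succ, ih]

lemma wallisMoment_zero_left (n : ℕ) : wallisMoment 0 n = 1 := by
  simp only [wallisMoment, mul_zero, dpowTwoMul_zero_left, mul_one, integral_wallisSin]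
  field_simp

lemma integral_wallisSin_mul_dpowTwoMul (b n : ℕ) :
    ∫ t in 0..π / 2, wallisSin n t * dpowTwoMul (2 * b) (π / 2 - t) = π / 2 * wallisMoment b n := by
  rw [wallisMoment, ← mul_assoc, show π / 2 * (2 / π) = 1 by field_simp, one_mul]

lemma integral_wallisSinDeriv_mul_dpowTwoMul (b : ℕ) {n : ℕ} (hn : n ≠ 0) :
    ∫ t in 0..π / 2, wallisSinDeriv n t * dpowTwoMul (2 * b + 1) (π / 2 - t) =
      π * wallisMoment b n := by
  obtain ⟨n, rfl⟩ := Nat.exists_eq_succ_of_ne_zero hn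
  rw [integral_deriv_mul_dpowTwoMul_succ (hasDerivAt_wallisSin _) (continuous_wallisSinDeriv _)
    (wallisSin_succ_zero n), integral_wallisSin_mul_dpowTwoMul]
  ring

lemma wallisMoment_sub_succ (b n : ℕ) :
    wallisMoment (b + 1) n - wallisMoment (b + 1) (n + 1) =
      1 / ((n + 1 : ℕ) : ℝ) ^ 2 * wallisMoment b (n + 1) := by
  have hint : ∀ m, IntervalIntegrable
      (fun t ↦ wallisSin m t * dpowTwoMul (2 * b + 1 + 1) (π / 2 - t)) volume 0 (π / 2) :=
    fun m ↦ Continuous.intervalIntegrable (by fun_prop) _ _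
  have hparts := integral_deriv_mul_dpowTwoMul_succ (c := π / 2)
    (hasDerivAt_wallisSinDeriv_succ n) (by fun_prop) (wallisSinDeriv_zero _) (2 * b + 1)
  simp only [mul_assoc, sub_mul, intervalIntegral.integral_const_mul,
    intervalIntegral.integral_sub (hint n) (hint (n + 1)),
    integral_wallisSinDeriv_mul_dpowTwoMul b n.succ_ne_zero] at hparts
  have hmoment : ∀ m, ∫ t in 0..π / 2, wallisSin m t * dpowTwoMul (2 * b + 1 + 1) (π / 2 - t) =
      π / 2 * wallisMoment (b + 1) m := integral_wallisSin_mul_dpowTwoMul (b + 1)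
  rw [hmoment, hmoment] at hparts
  rw [one_div_mul_eq_div, eq_div_iff (by positivity)]
  push_cast
  exact mul_left_cancel₀ two_pi_pos.ne' (by linear_combination hparts)

lemma wallisSin_mul_cos_sq (n : ℕ) (t : ℝ) :
    wallisSin n t * cos t ^ 2 =
      wallisSin n t - (2 * n + 1) / (2 * n + 2) * wallisSin (n + 1) t := by
  have hsucc : wallisFactor n = wallisFactor (n + 1) * (2 * n + 1) / (2 * n + 2) := by
    rw [wallisFactor_succ]
    field_simp
  simp only [wallisSin, hsucc, cos_sq', mul_add_one, pow_add]
  ring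

lemma wallisMoment_succ_le (b n : ℕ) :
    wallisMoment (b + 1) n ≤ π ^ (2 * b + 2) / (2 * n + 2) := by
  have hbound : ∀ t ∈ Icc 0 (π / 2), wallisSin n t * dpowTwoMul (2 * (b + 1)) (π / 2 - t) ≤
      π ^ (2 * b + 2) * (wallisSin n t - (2 * n + 1) / (2 * n + 2) * wallisSin (n + 1) t) := by
    intro t ht
    have hle := dpowTwoMul_add_two_le (2 * b) (sub_nonneg.2 ht.2) (sub_le_self _ ht.1)
    rw [sin_pi_div_two_sub] at hle
    calc wallisSin n t * dpowTwoMul (2 * (b + 1)) (π / 2 - t)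
        ≤ wallisSin n t * (π ^ (2 * b + 2) * cos t ^ 2) :=
          mul_le_mul_of_nonneg_left hle (wallisSin_nonneg n t)
      _ = π ^ (2 * b + 2) * (wallisSin n t - (2 * n + 1) / (2 * n + 2) * wallisSin (n + 1) t) := by
          rw [← wallisSin_mul_cos_sq]; ring
  have hmono := intervalIntegral.integral_mono_on (μ := volume) (by positivity)
    (Continuous.intervalIntegrable (by fun_prop) _ _)
    (Continuous.intervalIntegrable (by fun_prop) _ _) hbound
  rw [intervalIntegral.integral_const_mul, intervalIntegral.integral_sub
    (Continuous.intervalIntegrable (by fun_prop) _ _)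
    (Continuous.intervalIntegrable (by fun_prop) _ _), intervalIntegral.integral_const_mul,
    integral_wallisSin, integral_wallisSin] at hmono
  calc wallisMoment (b + 1) n
      ≤ 2 / π * (π ^ (2 * b + 2) * (π / 2 - (2 * n + 1) / (2 * n + 2) * (π / 2))) :=
        mul_le_mul_of_nonneg_left hmono (by positivity)
    _ = π ^ (2 * b + 2) / (2 * n + 2) := by field_simp; ring

lemma tendsto_wallisMoment_succ (b : ℕ) : Tendsto (wallisMoment (b + 1)) atTop (𝓝 0) := by
  refine squeeze_zero (wallisMoment_nonneg (b + 1)) (wallisMoment_succ_le b) ?_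
  exact Tendsto.const_div_atTop (tendsto_atTop_add_const_right _ _
    (tendsto_natCast_atTop_atTop.const_mul_atTop two_pos)) _

lemma zetaTail_eq_wallisMoment (b n : ℕ) : zetaTail b n = wallisMoment b n :=
  (hasSum_tailIndex_prod_of_sub_eq (w := fun m ↦ 1 / (m : ℝ) ^ 2) (fun m ↦ by positivity)
    wallisMoment_zero_left wallisMoment_sub_succ tendsto_wallisMoment_succ b n).tsum_eq

end WallisMoment

section Integral

lemma integral_zero_one_eq_integral_sin_mul_cos (g : ℝ → ℝ) :
    ∫ x in (0 : ℝ)..1, g x = ∫ t in 0..π / 2, g (sin t) * cos t := by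
  have hcos : ∀ t ∈ Ioo (min 0 (π / 2)) (max 0 (π / 2)), 0 ≤ cos t := fun t ht ↦ by
    rw [min_eq_left (by positivity), max_eq_right (by positivity)] at ht
    exact cos_nonneg_of_mem_Icc ⟨by linarith [ht.1, pi_pos], ht.2.le⟩
  simpa using (intervalIntegral.integral_comp_mul_deriv_of_deriv_nonneg (g := g)
    continuous_sin.continuousOn (fun t _ ↦ hasDerivAt_sin t) hcos).symm

lemma integral_arcsin_arccos_eq_integral_cot (k l : ℕ) :
    ∫ x in (0 : ℝ)..1, (2 * arcsin x) ^ k / (k.factorial * x) *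
        ((2 * arccos x) ^ l / l.factorial) =
      ∫ t in 0..π / 2, dpowTwoMul k t * cot t * dpowTwoMul l (π / 2 - t) := by
  rw [integral_zero_one_eq_integral_sin_mul_cos]
  refine intervalIntegral.integral_congr fun t ht ↦ ?_
  rw [uIcc_of_le (by positivity)] at ht
  have harcsin : arcsin (sin t) = t := arcsin_sin (by linarith [ht.1, pi_pos]) ht.2
  simp only [arccos, harcsin, dpowTwoMul, cot_eq_cos_div_sin]
  ring

lemma intervalIntegrable_dpowTwoMul_mul_cot_mul (k : ℕ) {g : ℝ → ℝ} (hg : Continuous g) :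
    IntervalIntegrable (fun t ↦ dpowTwoMul (k + 2) t * cot t * g t) volume 0 (π / 2) := by
  have hmeas : Measurable fun t ↦ dpowTwoMul (k + 2) t * cot t * g t := by
    simp only [cot_eq_cos_div_sin]
    have := (continuous_dpowTwoMul (k + 2)).measurable
    fun_prop
  have hdom : Continuous fun t ↦ π ^ (k + 2) * (sin t * cos t) * |g t| := by fun_prop
  refine (hdom.intervalIntegrable 0 (π / 2)).mono_fun' hmeas.aestronglyMeasurable ?_
  refine ae_restrict_of_forall_mem measurableSet_uIoc fun t ht ↦ ?_
  rw [uIoc_of_le (by positivity)] at ht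
  have hsin : 0 < sin t := sin_pos_of_pos_of_lt_pi ht.1 (by linarith [ht.2, pi_pos])
  have hcos : 0 ≤ cos t := cos_nonneg_of_mem_Icc ⟨by linarith [ht.1, pi_pos], ht.2⟩
  have hcot : 0 ≤ cot t := by rw [cot_eq_cos_div_sin]; positivity
  simp only [norm_mul, norm_of_nonneg (dpowTwoMul_nonneg _ ht.1.le), norm_of_nonneg hcot,
    norm_eq_abs]
  refine mul_le_mul_of_nonneg_right ?_ (abs_nonneg _)
  calc dpowTwoMul (k + 2) t * cot t
      ≤ π ^ (k + 2) * sin t ^ 2 * cot t :=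
        mul_le_mul_of_nonneg_right (dpowTwoMul_add_two_le k ht.1.le ht.2) hcot
    _ = π ^ (k + 2) * (sin t * cos t) := by rw [cot_eq_cos_div_sin]; field_simp

lemma hasSum_zetaHead_mul_wallisSinDeriv (a : ℕ) {t : ℝ} (ht : t ∈ Ioc 0 (π / 2)) :
    HasSum (fun n : ℕ ↦ zetaHead a n / (2 * n ^ 3) * wallisSinDeriv n t)
      (dpowTwoMul (2 * a + 2) t * cot t) := by
  obtain ht' | rfl := ht.2.lt_or_eq
  · have hsin : sin t ≠ 0 := (sin_pos_of_pos_of_lt_pi ht.1 (by linarith [pi_pos])).ne'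
    refine ((hasSum_headCoeff_mul_wallisSin (a + 1) ⟨ht.1.le, ht'⟩).mul_right (cot t)).congr_fun
      fun n ↦ ?_
    rcases eq_or_ne n 0 with rfl | hn
    · simp [headCoeff]
    · rw [wallisSinDeriv_eq_mul_cot n hsin, headCoeff]
      field_simp
  · simp [wallisSinDeriv_pi_div_two, cot_eq_cos_div_sin, hasSum_zero]

lemma hasSum_zetaHead_mul_zetaTail (a b : ℕ) :
    HasSum (fun n : ℕ ↦ π / 2 * (1 / (n : ℝ) ^ 3 * zetaHead a n * zetaTail b n))
      (∫ t in 0..π / 2, dpowTwoMul (2 * a + 2) t * cot t * dpowTwoMul (2 * b + 1) (π / 2 - t)) := by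
  set F : ℕ → ℝ → ℝ := fun n t ↦
    zetaHead a n / (2 * n ^ 3) * wallisSinDeriv n t * dpowTwoMul (2 * b + 1) (π / 2 - t) with hF
  have hsum : ∀ t ∈ Ι 0 (π / 2), HasSum (F · t)
      (dpowTwoMul (2 * a + 2) t * cot t * dpowTwoMul (2 * b + 1) (π / 2 - t)) := fun t ht ↦
    (hasSum_zetaHead_mul_wallisSinDeriv a (uIoc_of_le pi_div_two_pos.le ▸ ht)).mul_right _
  have hF_nonneg : ∀ n, ∀ t ∈ Ι 0 (π / 2), 0 ≤ F n t := fun n t ht ↦ by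
    rw [uIoc_of_le pi_div_two_pos.le] at ht
    have := zetaHead_nonneg a n
    have := wallisSinDeriv_nonneg n (Ioc_subset_Icc_self ht)
    have := dpowTwoMul_nonneg (2 * b + 1) (sub_nonneg.2 ht.2)
    positivity
  have hF_integral : ∀ n, ∫ t in 0..π / 2, F n t =
      π / 2 * (1 / (n : ℝ) ^ 3 * zetaHead a n * zetaTail b n) := fun n ↦ by
    rcases eq_or_ne n 0 with rfl | hn
    · simp [hF]
    · simp only [hF, mul_assoc, intervalIntegral.integral_const_mul,
        integral_wallisSinDeriv_mul_dpowTwoMul b hn, zetaTail_eq_wallisMoment]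
      field_simp
  simp only [← hF_integral]
  refine intervalIntegral.hasSum_integral_of_dominated_convergence F
    (fun n ↦ Continuous.aestronglyMeasurable (by fun_prop))
    (fun n ↦ ae_of_all _ fun t ht ↦ (norm_of_nonneg (hF_nonneg n t ht)).le)
    (ae_of_all _ fun t ht ↦ (hsum t ht).summable) ?_ (ae_of_all _ hsum)
  exact (intervalIntegrable_dpowTwoMul_mul_cot_mul (2 * a) (by fun_prop)).congr
    fun t ht ↦ (hsum t ht).tsum_eq.symm

end Integral

lemma H_eq_tsum_nat (a b : ℕ) :
    H a b = ∑' n : ℕ, 1 / (n : ℝ) ^ 3 * zetaHead a n * zetaTail b n :=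
  tsum_pnat_eq_tsum_of_eq_zero
    (f := fun n : ℕ ↦ 1 / (n : ℝ) ^ 3 * zetaHead a n * zetaTail b n) (by simp)

theorem integral_arcsin_arccos_eq_H (a b : ℕ) :
    (∫ x in (0:ℝ)..1,
        (2 * Real.arcsin x) ^ (2 * a + 2) / ((Nat.factorial (2 * a + 2)) * x) *
          ((2 * Real.arccos x) ^ (2 * b + 1) / (Nat.factorial (2 * b + 1)))) =
      (π / 2) * H a b := by
  rw [integral_arcsin_arccos_eq_integral_cot, H_eq_tsum_nat, ← tsum_mul_left]
  exact (hasSum_zetaHead_mul_zetaTail a b).tsum_eq.symm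
end
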